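/- For integers i < j ≤ k < l with j + k = i + l and any partition ν, the reduced Kronecker coefficients of one-row partitions satisfy ḡ_{(j)(k)}^ν ≥ ḡ_{(i)(l)}^ν. In particular, taking j = k = (λ₁+μ₁)/2, i = μ₁ ≤ j, l = λ₁: ḡ_{((λ₁+μ₁)/2)((λ₁+μ₁)/2)}^ν ≥ ḡ_{(λ₁)(μ₁)}^ν whenever λ₁ + μ₁ is even, i.e., Conjecture (log-concavity of reduced Kronecker coefficients) holds for one-row partitions. -/

import Mathlib

open MvPolynomial

/-- Power sum polynomial `p_r` in `d` variables. -/
noncomputable def powSum (d r : ℕ) : MvPolynomial (Fin d) ℤ := ∑ i, X i ^ r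

/-- The power sum polynomial associated to a permutation: the product of `p_c` over
cycle lengths `c` of the permutation, including fixed points. -/
noncomputable def permPowSum (d : ℕ) (σ : Equiv.Perm (Fin d)) : MvPolynomial (Fin d) ℤ :=
  (σ.cycleType.map (powSum d)).prod * (powSum d 1) ^ (d - σ.cycleType.sum)

/-- The Vandermonde product `a_δ = ∏_{i<j} (x_i - x_j)`. -/
noncomputable def vandermonde (d : ℕ) : MvPolynomial (Fin d) ℤ :=
  ∏ p ∈ Finset.univ.filter (fun p : Fin d × Fin d => p.1 < p.2), (X p.1 - X p.2)

/-- The exponent `λ + δ` where `δ = (d-1, d-2, …, 0)`; `lam` is `0`-indexed. -/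
noncomputable def staircase (d : ℕ) (lam : ℕ → ℕ) : Fin d →₀ ℕ :=
  Finsupp.equivFunOnFinite.symm (fun i => lam i.val + (d - 1 - i.val))

/-- Frobenius character formula: the irreducible character `χ^λ` of the symmetric
group `S_d` evaluated at `σ` is the coefficient of `x^{λ+δ}` in `a_δ · p_{cycletype σ}`. -/
noncomputable def chi (d : ℕ) (lam : ℕ → ℕ) (σ : Equiv.Perm (Fin d)) : ℤ :=
  coeff (staircase d lam) (vandermonde d * permPowSum d σ)

/-- The Kronecker coefficient `g_{λμ}^ν = ⟨χ^λ χ^μ, χ^ν⟩` for `S_d`. -/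
noncomputable def gKron (d : ℕ) (lam mu nu : ℕ → ℕ) : ℤ :=
  (∑ σ : Equiv.Perm (Fin d), chi d lam σ * chi d mu σ * chi d nu σ) / (d.factorial : ℤ)

/-- A partition, encoded as a weakly decreasing finitely supported function `ℕ → ℕ`
(`0`-indexed: `f 0 = λ₁`). -/
def IsPtn (f : ℕ →₀ ℕ) : Prop := ∀ i j : ℕ, i ≤ j → f j ≤ f i

/-- The size `|λ|` of a partition. -/
def psize (f : ℕ →₀ ℕ) : ℕ := f.sum fun _ n => n

/-- The padded partition `λ[d] = (d - |λ|, λ₁, λ₂, …)`. -/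
def pad (f : ℕ →₀ ℕ) (d : ℕ) : ℕ → ℕ := fun i => if i = 0 then d - psize f else f (i - 1)

/-- The one-row partition `(j)`. -/
noncomputable def row (j : ℕ) : ℕ →₀ ℕ := Finsupp.single 0 j

/-! At a permutation with cycle lengths `c`, the two-row character `χ^{(d-i,i)}` is the coefficient
of `x^i` in `(1 - x) ∏_c (1 + x^c)`. Since `(1 + x^c)(1 + y^c)` is the `c`-th power sum of the
alphabet `1, xy, x, y`, Frobenius' formula `ch χ^λ = s_λ` identifies the Kronecker coefficient of
`(i)[d]`, `(l)[d]` and `ν[d]` with the coefficient of `x^i y^l` in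
`(1 - x)(1 - y) s_{ν[d]}(1, xy, x, y)`. Up to terms of degree growing with `d`, expanding the
Jacobi–Trudi determinant along its first row turns this into `∑_k (xy)^k s_ν(xy, x, y)`, because
multiplication by `(1 - x)(1 - y)` removes `x` and `y` from `h_N(1, xy, x, y)`. Finally,
`s_ν(xy, x, y)` is a nonnegative combination of the elements `(xy)^a h_b(x, y)`, each of which has
symmetric unimodal coefficients along the monomials of any fixed degree. -/

section CompleteHomogeneous

variable {R : Type*} [CommRing R]

/-- The generating series `∏_{t ∈ Y} 1 / (1 - t X)` of the complete homogeneous symmetric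
functions of the alphabet `Y`. -/
noncomputable def completeHomSeries (Y : Multiset R) : PowerSeries R :=
  (Y.map fun t => PowerSeries.mk (t ^ ·)).prod

/-- The complete homogeneous symmetric function `h_n(Y)` of a finite alphabet `Y`. The degree is
an integer, with `h_n = 0` for `n < 0`, so that Jacobi–Trudi matrices need no case distinction. -/
noncomputable def completeHom (Y : Multiset R) : ℤ → R
  | .ofNat n => PowerSeries.coeff n (completeHomSeries Y)
  | .negSucc _ => 0

theorem completeHom_natCast (Y : Multiset R) (n : ℕ) :
    completeHom Y n = PowerSeries.coeff n (completeHomSeries Y) :=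
  rfl

theorem completeHom_of_neg (Y : Multiset R) {n : ℤ} (hn : n < 0) : completeHom Y n = 0 := by
  obtain ⟨m, rfl⟩ := Int.eq_negSucc_of_lt_zero hn
  rfl

theorem completeHomSeries_cons (t : R) (Y : Multiset R) :
    completeHomSeries (t ::ₘ Y) = PowerSeries.mk (t ^ ·) * completeHomSeries Y := by
  simp [completeHomSeries]

@[simp]
theorem completeHom_zero (Y : Multiset R) : completeHom Y 0 = 1 := by
  rw [← Nat.cast_zero, completeHom_natCast, PowerSeries.coeff_zero_eq_constantCoeff_apply,
    completeHomSeries, map_multiset_prod, Multiset.map_map]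
  exact Multiset.prod_eq_one (by simp)

theorem completeHom_empty {n : ℤ} (hn : n ≠ 0) : completeHom (0 : Multiset R) n = 0 := by
  rcases n with n | n
  · change PowerSeries.coeff n (1 : PowerSeries R) = 0
    rw [PowerSeries.coeff_one, if_neg (by simpa using hn)]
  · rfl

theorem completeHomSeries_cons_eq (t : R) (Y : Multiset R) :
    completeHomSeries (t ::ₘ Y) =
      PowerSeries.C t * PowerSeries.X * completeHomSeries (t ::ₘ Y) + completeHomSeries Y := by
  have geometric : (PowerSeries.mk (t ^ ·) : PowerSeries R) =
      PowerSeries.C t * PowerSeries.X * PowerSeries.mk (t ^ ·) + 1 := by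
    ext (_ | n)
    · simp
    · rw [mul_assoc, map_add, PowerSeries.coeff_C_mul, PowerSeries.coeff_succ_X_mul]
      simp [PowerSeries.coeff_one, pow_succ']
  rw [completeHomSeries_cons]
  linear_combination completeHomSeries Y * geometric

theorem completeHom_cons_add_one (t : R) (Y : Multiset R) (n : ℤ) :
    completeHom (t ::ₘ Y) (n + 1) =
      t * completeHom (t ::ₘ Y) n + completeHom Y (n + 1) := by
  rcases lt_trichotomy n (-1) with hn | rfl | hn
  · simp [completeHom_of_neg, show n < 0 by omega, show n + 1 < 0 by omega]
  · simp [completeHom_of_neg]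
  · obtain ⟨m, rfl⟩ := Int.eq_ofNat_of_zero_le (show 0 ≤ n by omega)
    rw [← Nat.cast_succ]
    simp only [completeHom_natCast]
    conv_lhs => rw [completeHomSeries_cons_eq, mul_assoc, map_add, PowerSeries.coeff_C_mul,
      PowerSeries.coeff_succ_X_mul]

theorem completeHom_pair_add_two (x y : R) {n : ℤ} (hn : n + 2 ≠ 0) :
    completeHom {x, y} (n + 2) =
      (x + y) * completeHom {x, y} (n + 1) - x * y * completeHom {x, y} n := by
  have hx := completeHom_cons_add_one x {y} (n + 1)
  have hx' := completeHom_cons_add_one x {y} n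
  have hy := completeHom_cons_add_one y 0 (n + 1)
  rw [add_assoc, one_add_one_eq_two] at hx hy
  rw [completeHom_empty hn] at hy
  simp only [Multiset.insert_eq_cons] at *
  linear_combination hx + hy - y * hx'

theorem completeHom_triple_add_three (x y z : R) {n : ℤ} (hn : n + 3 ≠ 0) :
    completeHom {x, y, z} (n + 3) =
      (x + y + z) * completeHom {x, y, z} (n + 2) -
        (x * y + x * z + y * z) * completeHom {x, y, z} (n + 1) +
        x * y * z * completeHom {x, y, z} n := by
  have h₃ := completeHom_cons_add_one x {y, z} (n + 2)
  have h₂ := completeHom_cons_add_one x {y, z} (n + 1)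
  have h₁ := completeHom_cons_add_one x {y, z} n
  have hpair := completeHom_pair_add_two y z (n := n + 1) (by omega)
  simp only [add_assoc, Int.reduceAdd, Multiset.insert_eq_cons] at *
  linear_combination h₃ + hpair - (y + z) * h₂ + y * z * h₁

theorem completeHom_singleton (t : R) (n : ℕ) : completeHom {t} n = t ^ n := by
  simp [completeHom_natCast, completeHomSeries]

theorem pow_dvd_completeHom {T : R} {Y : Multiset R} (hY : ∀ t ∈ Y, T ∣ t) (n : ℕ) :
    T ^ n ∣ completeHom Y n := by
  induction Y using Multiset.induction generalizing n with
  | empty =>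
    rcases n.eq_zero_or_pos with rfl | hn
    · simp
    · simp [completeHom_empty (R := R) (Nat.cast_ne_zero.2 hn.ne')]
  | cons t Y ih =>
    have dvd_tail := ih fun s hs => hY s (Multiset.mem_cons_of_mem hs)
    induction n with
    | zero => simp
    | succ n ihn =>
      have dvd_tail_succ := dvd_tail (n + 1)
      push_cast at dvd_tail_succ ⊢
      rw [completeHom_cons_add_one]
      refine dvd_add ?_ dvd_tail_succ
      rw [pow_succ']
      exact mul_dvd_mul (hY t (Multiset.mem_cons_self t Y)) ihn

theorem one_sub_mul_sum_completeHom_cons (t : R) (Y : Multiset R) (n : ℕ) :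
    (1 - t) * ∑ k ∈ Finset.range (n + 1), completeHom (t ::ₘ Y) k =
      ∑ k ∈ Finset.range (n + 1), completeHom Y k - t * completeHom (t ::ₘ Y) n := by
  induction n with
  | zero => simp
  | succ n ih =>
    rw [Finset.sum_range_succ, mul_add, ih, Finset.sum_range_succ _ (n + 1)]
    push_cast
    linear_combination completeHom_cons_add_one t Y n

theorem completeHom_one_cons (Y : Multiset R) (n : ℕ) :
    completeHom (1 ::ₘ Y) n = ∑ k ∈ Finset.range (n + 1), completeHom Y k := by
  linear_combination one_sub_mul_sum_completeHom_cons 1 Y n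

theorem pow_dvd_completeHom_one_cons_sub {T x y : R} (hx : T ∣ x) (hy : T ∣ y) (n : ℕ) :
    T ^ n ∣ (1 - x) * (1 - y) * completeHom {1, x * y, x, y} n -
      ∑ k ∈ Finset.range (n + 1), (x * y) ^ k := by
  have hxy : T ∣ x * y := hx.mul_right y
  have sum_triple : completeHom {1, x * y, x, y} n =
      ∑ k ∈ Finset.range (n + 1), completeHom {x * y, x, y} k := completeHom_one_cons _ n
  have sum_pair : (1 - x) * ∑ k ∈ Finset.range (n + 1), completeHom {x * y, x, y} k =
      ∑ k ∈ Finset.range (n + 1), completeHom {x * y, y} k - x * completeHom {x * y, x, y} n := by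
    rw [show ({x * y, x, y} : Multiset R) = x ::ₘ {x * y, y} from Multiset.cons_swap _ _ _]
    exact one_sub_mul_sum_completeHom_cons x _ n
  have sum_single : (1 - y) * ∑ k ∈ Finset.range (n + 1), completeHom {x * y, y} k =
      ∑ k ∈ Finset.range (n + 1), (x * y) ^ k - y * completeHom {x * y, y} n := by
    simp only [← completeHom_singleton]
    rw [show ({x * y, y} : Multiset R) = y ::ₘ {x * y} from Multiset.pair_comm _ _]
    exact one_sub_mul_sum_completeHom_cons y _ n
  have dvd_triple : T ^ n ∣ completeHom {x * y, x, y} n :=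
    pow_dvd_completeHom (by simp [hx, hy, hxy]) n
  have dvd_pair : T ^ n ∣ completeHom {x * y, y} n :=
    pow_dvd_completeHom (by simp [hy, hxy]) n
  convert dvd_add (dvd_triple.mul_left (-x * (1 - y))) (dvd_pair.mul_left (-y)) using 1
  linear_combination (1 - x) * (1 - y) * sum_triple + (1 - y) * sum_pair + sum_single

end CompleteHomogeneous

section UnimodalCone

variable {R : Type*} [CommRing R] {x y r : R}

/-- The additive cone spanned by the elements `(x y)^a h_b(x, y)`. In degree `N` in `x` and `y`
these are the sums `∑ x^s y^(N-s)` over the intervals of exponents `s` symmetric about `N / 2`, so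
the cone consists of the polynomials whose homogeneous parts are symmetric and unimodal. -/
def unimodalCone (x y : R) : AddSubmonoid R :=
  AddSubmonoid.closure {r | ∃ a b : ℕ, r = (x * y) ^ a * completeHom {x, y} b}

theorem completeHom_mem_unimodalCone (x y : R) (b : ℕ) :
    completeHom {x, y} b ∈ unimodalCone x y :=
  AddSubmonoid.subset_closure ⟨0, b, by simp⟩

theorem mul_mem_unimodalCone (hr : r ∈ unimodalCone x y) : x * y * r ∈ unimodalCone x y := by
  induction hr using AddSubmonoid.closure_induction with
  | mem r hr =>
    obtain ⟨a, b, rfl⟩ := hr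
    exact AddSubmonoid.subset_closure ⟨a + 1, b, by ring⟩
  | zero => simp [zero_mem]
  | add r s _ _ hr hs => rw [mul_add]; exact add_mem hr hs

theorem pow_mul_mem_unimodalCone (hr : r ∈ unimodalCone x y) (k : ℕ) :
    (x * y) ^ k * r ∈ unimodalCone x y := by
  induction k with
  | zero => simpa
  | succ k ih => rw [pow_succ', mul_assoc]; exact mul_mem_unimodalCone ih

variable (x y)

theorem pair_mul_pair_sub_mem_unimodalCone {m k : ℤ} (hm : -1 ≤ m) (hmk : m < k) :
    completeHom {x, y} k * completeHom {x, y} (m + 1) -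
      completeHom {x, y} (k + 1) * completeHom {x, y} m ∈ unimodalCone x y := by
  induction m, hm using Int.leInduction generalizing k with
  | base =>
    lift k to ℕ using by omega
    simpa [completeHom_of_neg] using completeHom_mem_unimodalCone x y k
  | succ m hm ih =>
    obtain ⟨k, rfl⟩ : ∃ j, k = j + 1 := ⟨k - 1, by omega⟩
    convert mul_mem_unimodalCone (ih (k := k) (by omega)) using 1
    have hm' := completeHom_pair_add_two x y (n := m) (by omega)
    have hk' := completeHom_pair_add_two x y (n := k) (by omega)
    simp only [add_assoc, Int.reduceAdd] at *
    linear_combination completeHom {x, y} (k + 1) * hm' - completeHom {x, y} (m + 1) * hk'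

theorem pair_mul_triple_sub_mem_unimodalCone {m k : ℤ} (hm : -1 ≤ m) (hmk : m < k) :
    completeHom {x, y} k * completeHom {x * y, x, y} (m + 1) -
      completeHom {x, y} (k + 1) * completeHom {x * y, x, y} m ∈ unimodalCone x y := by
  induction m, hm using Int.leInduction generalizing k with
  | base =>
    lift k to ℕ using by omega
    simpa [completeHom_of_neg] using completeHom_mem_unimodalCone x y k
  | succ m hm ih =>
    convert add_mem (mul_mem_unimodalCone (ih (k := k) (by omega)))
      (pair_mul_pair_sub_mem_unimodalCone x y (m := m + 1) (by omega) hmk) using 1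
    have h₂ := completeHom_cons_add_one (x * y) {x, y} (m + 1)
    have h₁ := completeHom_cons_add_one (x * y) {x, y} m
    simp only [Multiset.insert_eq_cons] at *
    linear_combination completeHom (x ::ₘ {y}) k * h₂ - completeHom (x ::ₘ {y}) (k + 1) * h₁

theorem triple_mul_triple_sub_mem_unimodalCone {m k : ℤ} (hm : -1 ≤ m) (hmk : m ≤ k) :
    completeHom {x * y, x, y} k * completeHom {x * y, x, y} (m + 1) -
      completeHom {x * y, x, y} (k + 1) * completeHom {x * y, x, y} m ∈ unimodalCone x y := by
  induction k, hmk using Int.leInduction with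
  | base => simp [mul_comm, zero_mem]
  | succ k hmk ih =>
    convert add_mem (mul_mem_unimodalCone ih)
      (pair_mul_triple_sub_mem_unimodalCone x y (k := k + 1) hm (by omega)) using 1
    have h₂ := completeHom_cons_add_one (x * y) {x, y} (k + 1)
    have h₁ := completeHom_cons_add_one (x * y) {x, y} k
    simp only [Multiset.insert_eq_cons] at *
    linear_combination completeHom ((x * y) ::ₘ x ::ₘ {y}) (m + 1) * h₁ -
      completeHom ((x * y) ::ₘ x ::ₘ {y}) m * h₂

theorem triple_mem_unimodalCone (n : ℕ) : completeHom {x * y, x, y} n ∈ unimodalCone x y := by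
  simpa [completeHom_of_neg] using
    triple_mul_triple_sub_mem_unimodalCone x y (m := -1) (k := n) le_rfl (by omega)

end UnimodalCone

section JacobiTrudi

variable {R : Type*} [CommRing R]

/-- The Jacobi–Trudi matrix `(h_{μ_i - i + j}(Y))` of size `n`; its determinant is the Schur
function `s_μ(Y)` when `μ` is a partition with at most `n` parts. -/
noncomputable def jacobiTrudi (Y : Multiset R) (n : ℕ) (μ : ℕ → ℕ) : Matrix (Fin n) (Fin n) R :=
  Matrix.of fun i j => completeHom Y ((μ i : ℤ) - (i : ℕ) + (j : ℕ))

theorem jacobiTrudi_apply (Y : Multiset R) (n : ℕ) (μ : ℕ → ℕ) (i j : Fin n) :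
    jacobiTrudi Y n μ i j = completeHom Y ((μ i : ℤ) - (i : ℕ) + (j : ℕ)) :=
  rfl

theorem det_jacobiTrudi_succ_of_eq_zero (Y : Multiset R) {n : ℕ} {μ : ℕ → ℕ} (hμ : μ n = 0) :
    (jacobiTrudi Y (n + 1) μ).det = (jacobiTrudi Y n μ).det := by
  have last_row (j : Fin n) : jacobiTrudi Y (n + 1) μ (Fin.last n) j.castSucc = 0 := by
    rw [jacobiTrudi_apply]
    exact completeHom_of_neg Y (by simp [hμ])
  have corner : jacobiTrudi Y (n + 1) μ (Fin.last n) (Fin.last n) = 1 := by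
    simp [jacobiTrudi_apply, hμ]
  rw [Matrix.det_succ_row _ (Fin.last n), Fin.sum_univ_castSucc,
    Finset.sum_eq_zero fun j _ => by rw [last_row, mul_zero, zero_mul], corner]
  simp only [Fin.val_last, Even.neg_one_pow ⟨n, rfl⟩, zero_add, one_mul, Fin.succAbove_last]
  rfl

theorem det_eq_zero_of_mulVec_eq_zero {n : Type*} [Fintype n] [DecidableEq n]
    {A : Matrix n n R} {v : n → R} {i : n} (hAv : A.mulVec v = 0) (hi : v i = 1) : A.det = 0 := by
  have h : A.det • v = 0 := by
    rw [← Matrix.one_mulVec (A.det • v), Matrix.mulVec_smul, ← Matrix.smul_mulVec,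
      ← Matrix.adjugate_mul, ← Matrix.mulVec_mulVec, hAv, Matrix.mulVec_zero]
  simpa [hi] using congr_fun h i

theorem det_jacobiTrudi_triple_eq_zero (x y z : R) {n : ℕ} {μ : ℕ → ℕ} (hμ : Antitone μ)
    (hn : μ (n + 3) ≠ 0) : (jacobiTrudi {x, y, z} (n + 4) μ).det = 0 := by
  let c : Fin (n + 4) → R := Fin.append (fun _ : Fin n => 0)
    ![-(x * y * z), x * y + x * z + y * z, -(x + y + z), 1]
  refine det_eq_zero_of_mulVec_eq_zero (v := c) (i := Fin.natAdd n 3) ?_ (by simp [c])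
  ext i
  have hi : μ (n + 3) ≤ μ i := hμ (by omega)
  have row_mul : (jacobiTrudi {x, y, z} (n + 4) μ).mulVec c i =
      ∑ k : Fin 4, completeHom {x, y, z} ((μ i : ℤ) - (i : ℕ) + n + (k : ℕ)) *
        c (Fin.natAdd n k) := by
    simp [Matrix.mulVec, dotProduct, c, Fin.sum_univ_add, jacobiTrudi_apply, add_assoc]
  rw [row_mul, Fin.sum_univ_four, Pi.zero_apply]
  simp only [c, Fin.append_right, Matrix.cons_val, Fin.coe_ofNat_eq_mod, Nat.reduceMod,
    Nat.cast_zero, Nat.cast_one, Nat.cast_ofNat, add_zero]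
  linear_combination
    completeHom_triple_add_three x y z (n := (μ i : ℤ) - (i : ℕ) + n) (by omega)

theorem det_jacobiTrudi_triple_three (x y z : R) {μ : ℕ → ℕ} (hμ : Antitone μ) (h : μ 2 ≠ 0) :
    (jacobiTrudi {x, y, z} 3 μ).det =
      x * y * z * (jacobiTrudi {x, y, z} 3 fun i => μ i - 1).det := by
  let u (i : Fin 3) (j : ℤ) : R := completeHom {x, y, z} ((μ i : ℤ) - (i : ℕ) - 1 + j)
  have pos (i : Fin 3) : 1 ≤ μ i := (Nat.one_le_iff_ne_zero.2 h).trans (hμ (by omega))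
  have recurrence (i : Fin 3) : u i 3 =
      (x + y + z) * u i 2 - (x * y + x * z + y * z) * u i 1 + x * y * z * u i 0 := by
    have := pos i
    simpa [u] using completeHom_triple_add_three x y z (n := (μ i : ℤ) - (i : ℕ) - 1) (by omega)
  have hJ : jacobiTrudi {x, y, z} 3 μ = Matrix.of fun i => ![u i 1, u i 2, u i 3] := by
    ext i j
    fin_cases j <;> exact congrArg (completeHom _) (by push_cast; omega)
  have hJ' : jacobiTrudi {x, y, z} 3 (fun i => μ i - 1) =
      Matrix.of fun i => ![u i 0, u i 1, u i 2] := by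
    ext i j
    have := pos i
    fin_cases j <;> exact congrArg (completeHom _) (by push_cast; omega)
  rw [hJ, hJ', Matrix.det_fin_three, Matrix.det_fin_three]
  simp only [recurrence, Matrix.of_apply, Matrix.cons_val]
  ring

theorem det_jacobiTrudi_two_mem_unimodalCone (x y : R) {μ : ℕ → ℕ} (hμ : Antitone μ) :
    (jacobiTrudi {x * y, x, y} 2 μ).det ∈ unimodalCone x y := by
  have h : (μ 1 : ℤ) ≤ μ 0 := mod_cast hμ zero_le_one
  have := triple_mul_triple_sub_mem_unimodalCone x y (m := (μ 1 : ℤ) - 1) (k := μ 0)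
    (by omega) (by omega)
  simpa [Matrix.det_fin_two, jacobiTrudi_apply] using this

theorem det_jacobiTrudi_three_mem_unimodalCone (x y : R) {μ : ℕ → ℕ} (hμ : Antitone μ) :
    (jacobiTrudi {x * y, x, y} 3 μ).det ∈ unimodalCone x y := by
  induction h : μ 2 generalizing μ with
  | zero =>
    rw [det_jacobiTrudi_succ_of_eq_zero _ h]
    exact det_jacobiTrudi_two_mem_unimodalCone x y hμ
  | succ c ih =>
    rw [det_jacobiTrudi_triple_three _ _ _ hμ (by omega), mul_assoc, mul_assoc, ← mul_assoc x y]
    refine mul_mem_unimodalCone (mul_mem_unimodalCone (ih ?_ (by simp [h])))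
    exact fun a b hab => Nat.sub_le_sub_right (hμ hab) 1

theorem det_jacobiTrudi_mem_unimodalCone (x y : R) (n : ℕ) {μ : ℕ → ℕ} (hμ : Antitone μ) :
    (jacobiTrudi {x * y, x, y} n μ).det ∈ unimodalCone x y := by
  induction n with
  | zero => simpa using completeHom_mem_unimodalCone x y 0
  | succ n ih =>
    by_cases hn : μ n = 0
    · rwa [det_jacobiTrudi_succ_of_eq_zero _ hn]
    match n, hn with
    | 0, _ => simpa [jacobiTrudi_apply] using triple_mem_unimodalCone x y (μ 0)
    | 1, _ => exact det_jacobiTrudi_two_mem_unimodalCone x y hμ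
    | 2, _ => exact det_jacobiTrudi_three_mem_unimodalCone x y hμ
    | n + 3, hn =>
      rw [det_jacobiTrudi_triple_eq_zero _ _ _ hμ hn]
      exact zero_mem _

theorem jacobiTrudi_submatrix_succ (Y : Multiset R) (n : ℕ) (μ : ℕ → ℕ) :
    (jacobiTrudi Y (n + 1) μ).submatrix Fin.succ Fin.succ =
      jacobiTrudi Y n fun i => μ (i + 1) := by
  ext i j
  simp only [Matrix.submatrix_apply, jacobiTrudi_apply, Fin.val_succ]
  congr 1
  omega

theorem det_jacobiTrudi_cons (t : R) (Y : Multiset R) (n : ℕ) (μ : ℕ → ℕ) :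
    (jacobiTrudi (t ::ₘ Y) (n + 1) μ).det =
      ((jacobiTrudi Y (n + 1) μ).updateCol 0
        fun i => completeHom (t ::ₘ Y) ((μ i : ℤ) - (i : ℕ))).det := by
  refine Matrix.det_eq_of_forall_col_eq_smul_add_pred (fun _ => t)
    (by simp [jacobiTrudi_apply]) fun i j => ?_
  have := completeHom_cons_add_one t Y ((μ i : ℤ) - (i : ℕ) + (j : ℕ))
  rw [Matrix.updateCol_ne (Fin.succ_ne_zero j)]
  simp only [jacobiTrudi_apply, Fin.val_succ, Fin.val_castSucc, Nat.cast_succ, ← add_assoc]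
  rw [this, add_comm]

theorem pow_dvd_det_jacobiTrudi_cons_sub {T : R} {Y : Multiset R} (hY : ∀ s ∈ Y, T ∣ s) (t : R)
    (n : ℕ) (μ : ℕ → ℕ) :
    T ^ μ 0 ∣ (jacobiTrudi (t ::ₘ Y) (n + 1) μ).det -
      completeHom (t ::ₘ Y) (μ 0) * (jacobiTrudi Y n fun i => μ (i + 1)).det := by
  rw [det_jacobiTrudi_cons, Matrix.det_succ_row_zero, Fin.sum_univ_succ,
    Matrix.submatrix_updateCol_succAbove, Fin.succAbove_zero, jacobiTrudi_submatrix_succ]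
  simp only [Fin.val_zero, pow_zero, one_mul, Matrix.updateCol_self, Nat.cast_zero, sub_zero,
    add_sub_cancel_left, ne_eq, Fin.succ_ne_zero, not_false_eq_true, Matrix.updateCol_ne]
  refine Finset.dvd_sum fun j _ => Dvd.dvd.mul_right (Dvd.dvd.mul_left ?_ _) _
  calc T ^ μ 0 ∣ T ^ (μ 0 + (j + 1)) := pow_dvd_pow T (Nat.le_add_right _ _)
    _ ∣ jacobiTrudi Y (n + 1) μ 0 j.succ := by
      simpa [jacobiTrudi_apply] using pow_dvd_completeHom hY (μ 0 + (j + 1))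

theorem exists_mem_unimodalCone_pow_dvd_sub {T x y : R} (hx : T ∣ x) (hy : T ∣ y) (n : ℕ)
    {μ : ℕ → ℕ} (hμ : Antitone fun i => μ (i + 1)) :
    ∃ r ∈ unimodalCone x y, T ^ μ 0 ∣
      (1 - x) * (1 - y) * (jacobiTrudi {1, x * y, x, y} (n + 1) μ).det - r := by
  let s := (jacobiTrudi {x * y, x, y} n fun i => μ (i + 1)).det
  have hs : s ∈ unimodalCone x y := det_jacobiTrudi_mem_unimodalCone x y n hμ
  refine ⟨(∑ k ∈ Finset.range (μ 0 + 1), (x * y) ^ k) * s, ?_, ?_⟩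
  · rw [Finset.sum_mul]
    exact sum_mem fun k _ => pow_mul_mem_unimodalCone hs k
  · have dvd_det : T ^ μ 0 ∣ (jacobiTrudi {1, x * y, x, y} (n + 1) μ).det -
        completeHom {1, x * y, x, y} (μ 0) * s :=
      pow_dvd_det_jacobiTrudi_cons_sub (by simp [hx, hy, hx.mul_right y]) 1 n μ
    have dvd_corner := pow_dvd_completeHom_one_cons_sub hx hy (μ 0)
    convert dvd_add (dvd_det.mul_left ((1 - x) * (1 - y))) (dvd_corner.mul_right s) using 1
    ring

end JacobiTrudi

section Unimodality

open scoped Polynomial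

theorem completeHom_pair {R : Type*} [CommRing R] (x y : R) (n : ℕ) :
    completeHom {x, y} n = ∑ k ∈ Finset.range (n + 1), x ^ k * y ^ (n - k) := by
  simp [completeHom_natCast, completeHomSeries, PowerSeries.coeff_mul,
    Finset.Nat.sum_antidiagonal_eq_sum_range_succ fun k m => x ^ k * y ^ m]

/-- The variable `x = T` of `ℤ[q][T]`; see `varY`. -/
noncomputable abbrev varX : ℤ[X][X] := Polynomial.X

/-- The variable `y = q T` of `ℤ[q][T]`. With `x = T` the monomial `x^i y^l` is `q^l T^(i + l)`, so
that powers of `T` record the total degree in `x` and `y`. -/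
noncomputable abbrev varY : ℤ[X][X] := Polynomial.C Polynomial.X * Polynomial.X

theorem coeff_coeff_mul_pow_mul_completeHom_pair (a b N l : ℕ) :
    (((varX * varY) ^ a * completeHom {varX, varY} b).coeff N).coeff l =
      if N = 2 * a + b ∧ a ≤ l ∧ l ≤ a + b then 1 else 0 := by
  have monomial_eq (k : ℕ) (hk : k ∈ Finset.range (b + 1)) :
      (varX * varY) ^ a * (varY ^ k * varX ^ (b - k)) =
        Polynomial.C (Polynomial.X ^ (a + k)) * Polynomial.X ^ (2 * a + b) := by
    obtain ⟨c, rfl⟩ := Nat.exists_eq_add_of_le (Finset.mem_range_succ_iff.1 hk)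
    rw [Nat.add_sub_cancel_left, Polynomial.C_pow]
    ring
  have sum_eq : ∑ k ∈ Finset.range (b + 1), (if l = a + k then (1 : ℤ) else 0) =
      if a ≤ l ∧ l ≤ a + b then 1 else 0 := by
    by_cases hl : a ≤ l
    · obtain ⟨c, rfl⟩ := Nat.exists_eq_add_of_le hl
      simp
    · rw [if_neg (by omega), Finset.sum_eq_zero fun k _ => if_neg (by omega)]
  rw [Multiset.pair_comm, completeHom_pair, Finset.mul_sum, Finset.sum_congr rfl monomial_eq]
  simp only [Polynomial.finsetSum_coeff, Polynomial.coeff_C_mul, Polynomial.coeff_X_pow]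
  split_ifs with hN h h <;> simp_all [Polynomial.coeff_X_pow]

theorem coeff_coeff_le_of_mem_unimodalCone {f : ℤ[X][X]}
    (hf : f ∈ unimodalCone varX varY)
    {i j k l : ℕ} (hij : i ≤ j) (hjk : j ≤ k) (hkl : j + k = i + l) :
    (f.coeff (i + l)).coeff l ≤ (f.coeff (i + l)).coeff k := by
  induction hf using AddSubmonoid.closure_induction with
  | zero => simp
  | add f g _ _ hf hg => simpa using add_le_add hf hg
  | mem f hf =>
    obtain ⟨a, b, rfl⟩ := hf
    rw [coeff_coeff_mul_pow_mul_completeHom_pair, coeff_coeff_mul_pow_mul_completeHom_pair]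
    split_ifs <;> omega

end Unimodality

section CycleProduct

variable {α : Type*} [Fintype α] [DecidableEq α] {R S : Type*} [CommRing R] [CommRing S]

/-- The product of `φ c` over the lengths `c` of all cycles of `σ`, fixed points included. For `φ`
the power sums of an alphabet this is the power sum symmetric function of the cycle type. -/
def cycleProd (φ : ℕ → R) (σ : Equiv.Perm α) : R :=
  (σ.partition.parts.map φ).prod

theorem cycleProd_eq (φ : ℕ → R) (σ : Equiv.Perm α) :
    cycleProd φ σ = (σ.cycleType.map φ).prod * φ 1 ^ (Fintype.card α - σ.cycleType.sum) := by
  simp [cycleProd, Equiv.Perm.parts_partition, Equiv.Perm.sum_cycleType]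

theorem cycleProd_mul (φ ψ : ℕ → R) (σ : Equiv.Perm α) :
    cycleProd (fun r => φ r * ψ r) σ = cycleProd φ σ * cycleProd ψ σ :=
  Multiset.prod_map_mul

theorem cycleProd_congr {φ ψ : ℕ → R} (h : ∀ r ≠ 0, φ r = ψ r) (σ : Equiv.Perm α) :
    cycleProd φ σ = cycleProd ψ σ := by
  rw [cycleProd, Multiset.map_congr rfl fun r hr => h r (σ.partition.parts_pos hr).ne', cycleProd]

theorem map_cycleProd (f : R →+* S) (φ : ℕ → R) (σ : Equiv.Perm α) :
    f (cycleProd φ σ) = cycleProd (fun r => f (φ r)) σ := by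
  simp [cycleProd, map_multiset_prod]

/-- The cycle of `σ` through a point, where cycles are the cycle factors of `σ` together with its
fixed points. -/
def cycleClass (σ : Equiv.Perm α) (m : α) : σ.cycleFactorsFinset ⊕ Function.fixedPoints σ :=
  if h : σ m = m then .inr ⟨m, h⟩
  else .inl ⟨σ.cycleOf m,
    Equiv.Perm.cycleOf_mem_cycleFactorsFinset_iff.2 (Equiv.Perm.mem_support.2 h)⟩

theorem cycleClass_eq_inl_iff {σ : Equiv.Perm α} {m : α} {c : σ.cycleFactorsFinset} :
    cycleClass σ m = .inl c ↔ m ∈ c.1.support := by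
  obtain ⟨c, hc⟩ := c
  constructor
  · intro h
    by_cases hm : σ m = m
    · simp [cycleClass, hm] at h
    · obtain rfl : σ.cycleOf m = c := by simpa [cycleClass, hm] using h
      simpa [Equiv.Perm.mem_support_cycleOf_iff] using hm
  · intro h
    have hm : σ m ≠ m :=
      Equiv.Perm.mem_support.1 (Equiv.Perm.mem_cycleFactorsFinset_support_le hc h)
    simp [cycleClass, hm, ← Equiv.Perm.cycle_is_cycleOf h hc]

theorem cycleClass_eq_inr_iff {σ : Equiv.Perm α} {m : α} {x : Function.fixedPoints σ} :
    cycleClass σ m = .inr x ↔ m = x := by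
  obtain ⟨x, hx⟩ := x
  by_cases hm : σ m = m
  · simp only [cycleClass, hm, ↓reduceDIte, Sum.inr.injEq]
    exact Subtype.mk_eq_mk
  · simp only [cycleClass, hm, ↓reduceDIte, reduceCtorEq, false_iff]
    rintro rfl
    exact hm hx

theorem cycleClass_surjective (σ : Equiv.Perm α) : Function.Surjective (cycleClass σ) := by
  rintro (c | x)
  · obtain ⟨m, hm⟩ := (Equiv.Perm.mem_cycleFactorsFinset_iff.1 c.2).1.nonempty_support
    exact ⟨m, cycleClass_eq_inl_iff.2 hm⟩
  · exact ⟨x, cycleClass_eq_inr_iff.2 rfl⟩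

theorem cycleClass_eq_iff_sameCycle {σ : Equiv.Perm α} {m m' : α} :
    cycleClass σ m = cycleClass σ m' ↔ σ.SameCycle m m' := by
  by_cases hm : σ m = m
  · have hclass : cycleClass σ m = .inr ⟨m, hm⟩ := cycleClass_eq_inr_iff.2 rfl
    rw [hclass, eq_comm, cycleClass_eq_inr_iff]
    exact ⟨fun h => h ▸ Equiv.Perm.SameCycle.refl σ m', fun h => (h.eq_of_left hm).symm⟩
  · have hmem := Equiv.Perm.mem_support.2 hm
    have hclass : cycleClass σ m =
        .inl ⟨σ.cycleOf m, Equiv.Perm.cycleOf_mem_cycleFactorsFinset_iff.2 hmem⟩ := dif_neg hm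
    rw [hclass, eq_comm, cycleClass_eq_inl_iff, Equiv.Perm.mem_support_cycleOf_iff]
    exact and_iff_left hmem

theorem cycleProd_eq_prod_cycleClass (φ : ℕ → R) (σ : Equiv.Perm α) :
    cycleProd φ σ = ∏ c, φ (Finset.univ.filter (cycleClass σ · = c)).card := by
  simp only [Fintype.prod_sum_type, cycleClass_eq_inl_iff, cycleClass_eq_inr_iff, cycleProd_eq,
    ← Equiv.Perm.card_fixedPoints]
  congr 1
  · simp only [Finset.filter_univ_mem]
    rw [Finset.prod_coe_sort σ.cycleFactorsFinset fun c => φ c.support.card,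
      Equiv.Perm.cycleType_def, Multiset.map_map]
    rfl
  · simp only [Finset.filter_eq', Finset.mem_univ, if_true, Finset.card_singleton,
      Finset.prod_const, Finset.card_univ]

theorem comp_eq_self_iff {β : Type*} {σ : Equiv.Perm α} {f : α → β} :
    f ∘ σ = f ↔ ∃ g, f = g ∘ cycleClass σ := by
  constructor
  · intro hf
    refine ⟨f ∘ Function.surjInv (cycleClass_surjective σ), funext fun m => ?_⟩
    obtain ⟨k, hk⟩ := (cycleClass_eq_iff_sameCycle.1
      (Function.surjInv_eq (cycleClass_surjective σ) (cycleClass σ m))).exists_nat_pow_eq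
    have iterate_invariant (k : ℕ) (m : α) : f ((σ ^ k) m) = f m := by
      induction k with
      | zero => rfl
      | succ k ih => rw [pow_succ', Equiv.Perm.mul_apply, ← ih]; exact congr_fun hf _
    exact (congrArg f hk).symm.trans (iterate_invariant k _)
  · rintro ⟨g, rfl⟩
    funext m
    exact congrArg g (cycleClass_eq_iff_sameCycle.2
      (Equiv.Perm.sameCycle_apply_left.2 (Equiv.Perm.SameCycle.refl σ m)))

theorem cycleProd_sum_pow {β : Type*} [Fintype β] [DecidableEq β] (Z : β → R)
    (σ : Equiv.Perm α) :
    cycleProd (fun r => ∑ b, Z b ^ r) σ = ∑ f : α → β with f ∘ σ = f, ∏ m, Z (f m) := by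
  rw [cycleProd_eq_prod_cycleClass, Finset.prod_univ_sum, Fintype.piFinset_univ]
  refine Finset.sum_bij (fun g _ => g ∘ cycleClass σ) (fun g _ => ?_)
    (fun _ _ _ _ h => (cycleClass_surjective σ).injective_comp_right h) (fun f hf => ?_)
    (fun g _ => ?_)
  · simpa using comp_eq_self_iff.2 ⟨g, rfl⟩
  · obtain ⟨g, rfl⟩ := comp_eq_self_iff.1 (Finset.mem_filter.1 hf).2
    exact ⟨g, Finset.mem_univ g, rfl⟩
  · simp [← Finset.prod_fiberwise' Finset.univ (cycleClass σ) fun c => Z (g c)]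

end CycleProduct

section Content

variable {α β : Type*} [Fintype α] [Fintype β] [DecidableEq β]

/-- The content of a colouring `F`: how often each colour is used. -/
def content (F : α → β) (b : β) : ℕ :=
  (Finset.univ.filter (F · = b)).card

theorem prod_comp_eq_prod_pow_content {M : Type*} [CommMonoid M] (Z : β → M) (F : α → β) :
    ∏ m, Z (F m) = ∏ b, Z b ^ content F b := by
  simp [← Finset.prod_fiberwise' Finset.univ F Z, content]

theorem card_comp_eq_self [DecidableEq α] (F : α → β) :
    (Finset.univ.filter fun σ : Equiv.Perm α => F ∘ σ = F).card =
      ∏ b, (content F b).factorial := by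
  rw [← Fintype.card_subtype, DomMulAct.stabilizer_card]
  simp only [Fintype.card_subtype, content]

theorem sum_apply_content [DecidableEq α] {R : Type*} [CommRing R] (w : (β → ℕ) → R) :
    ∑ F : α → β, w (content F) =
      ∑ a ∈ Finset.piAntidiag Finset.univ (Fintype.card α),
        (Nat.multinomial Finset.univ a : R) * w a := by
  -- Apply the linear functional `X^a ↦ w a` to the two expansions of `(∑ b, X b) ^ card α`.
  let L : MvPolynomial β R →ₗ[R] R := (basisMonomials β R).constr R fun a => w a
  have L_apply (a : β → ℕ) : L (∏ b, X b ^ a b) = w a := by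
    have : ∏ b, X b ^ a b = basisMonomials β R (Finsupp.equivFunOnFinite.symm a) := by
      simp [monomial_eq, Finsupp.prod_fintype]
    simp [L, this, -coe_basisMonomials]
  have expansion : ∑ F : α → β, ∏ b, (X b : MvPolynomial β R) ^ content F b =
      ∑ a ∈ Finset.piAntidiag Finset.univ (Fintype.card α),
        Nat.multinomial Finset.univ a • ∏ b, X b ^ a b := by
    simp only [← prod_comp_eq_prod_pow_content, nsmul_eq_mul]
    rw [← Finset.sum_pow_eq_sum_piAntidiag, ← Finset.card_univ, ← Finset.prod_const,
      Finset.prod_univ_sum, Fintype.piFinset_univ]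
  simpa only [map_sum, map_nsmul, L_apply, ← nsmul_eq_mul] using congrArg L expansion

end Content

section CauchyIdentity

variable {R : Type*} [CommRing R]

theorem coeff_prod_univ {ι : Type*} [Fintype ι] [DecidableEq ι] (f : ι → PowerSeries R) (d : ℕ) :
    PowerSeries.coeff d (∏ i, f i) =
      ∑ a ∈ Finset.piAntidiag Finset.univ d, ∏ i, PowerSeries.coeff (a i) (f i) := by
  rw [PowerSeries.coeff_prod]
  exact Finset.sum_equiv Finsupp.equivFunOnFinite (by simp) (by simp)

theorem completeHom_map_univ {β : Type*} [Fintype β] [DecidableEq β] (Z : β → R) (N : ℕ) :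
    completeHom (Finset.univ.val.map Z) N =
      ∑ a ∈ Finset.piAntidiag Finset.univ N, ∏ b, Z b ^ a b := by
  rw [completeHom_natCast, completeHomSeries, Multiset.map_map]
  simpa using coeff_prod_univ (fun b => PowerSeries.mk (Z b ^ ·)) N

theorem completeHom_map_mul {ι β : Type*} [Fintype ι] [DecidableEq ι] [Fintype β] (Y : ι → R)
    (Z : β → R) (N : ℕ) :
    completeHom (Finset.univ.val.map fun p : ι × β => Y p.1 * Z p.2) N =
      ∑ e ∈ Finset.piAntidiag Finset.univ N,
        ∏ i, Y i ^ e i * completeHom (Finset.univ.val.map Z) (e i) := by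
  have series : completeHomSeries (Finset.univ.val.map fun p : ι × β => Y p.1 * Z p.2) =
      ∏ i, PowerSeries.rescale (Y i) (completeHomSeries (Finset.univ.val.map Z)) := by
    simp only [completeHomSeries, Multiset.map_map, Function.comp_def, Finset.prod_map_val,
      Fintype.prod_prod_type, map_prod, PowerSeries.rescale_mk, mul_pow]
  simp only [completeHom_natCast, series, coeff_prod_univ, PowerSeries.coeff_rescale]

theorem map_completeHom {S : Type*} [CommRing S] (f : R →+* S) (Y : Multiset R) (n : ℤ) :
    f (completeHom Y n) = completeHom (Y.map f) n := by
  rcases n with n | _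
  · have series : PowerSeries.map f (completeHomSeries Y) = completeHomSeries (Y.map f) := by
      simp only [completeHomSeries, map_multiset_prod, Multiset.map_map]
      congr 2
      ext
      simp
    exact (PowerSeries.coeff_map f n _).symm.trans (congrArg _ series)
  · exact map_zero f

variable {α : Type*} [Fintype α] [DecidableEq α]

theorem sum_cycleProd_sum_pow {β : Type*} [Fintype β] (Z : β → R) :
    ∑ σ : Equiv.Perm α, cycleProd (fun r => ∑ b, Z b ^ r) σ =
      (Fintype.card α).factorial * completeHom (Finset.univ.val.map Z) (Fintype.card α) := by
  classical
  calc ∑ σ : Equiv.Perm α, cycleProd (fun r => ∑ b, Z b ^ r) σ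
      = ∑ F : α → β, (∏ b, (content F b).factorial : ℕ) * ∏ b, Z b ^ content F b := by
        simp only [cycleProd_sum_pow, Finset.sum_filter]
        rw [Finset.sum_comm]
        simp only [← Finset.sum_filter, Finset.sum_const, card_comp_eq_self, nsmul_eq_mul,
          prod_comp_eq_prod_pow_content]
    _ = ∑ a ∈ Finset.piAntidiag Finset.univ (Fintype.card α),
          (Fintype.card α).factorial * ∏ b, Z b ^ a b := by
        rw [sum_apply_content fun a => (∏ b, (a b).factorial : ℕ) * ∏ b, Z b ^ a b]
        refine Finset.sum_congr rfl fun a ha => ?_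
        rw [← mul_assoc, ← Nat.cast_mul, mul_comm, mul_comm (Nat.multinomial _ _),
          Nat.multinomial_spec, (Finset.mem_piAntidiag.1 ha).1, mul_comm]
    _ = (Fintype.card α).factorial * completeHom (Finset.univ.val.map Z) (Fintype.card α) := by
        rw [completeHom_map_univ, Finset.mul_sum]

theorem coeff_prod_X_pow_mul_C {ι : Type*} [Fintype ι] (a : ι → ℕ) (c : ι → R) (e : ι →₀ ℕ) :
    coeff e (∏ i, (X i : MvPolynomial ι R) ^ a i * C (c i)) = if a = e then ∏ i, c i else 0 := by
  classical
  have monomial_form : ∏ i, (X i : MvPolynomial ι R) ^ a i * C (c i) =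
      monomial (Finsupp.equivFunOnFinite.symm a) (∏ i, c i) := by
    rw [monomial_eq, Finsupp.prod_fintype _ _ (by simp), Finset.prod_mul_distrib, map_prod,
      mul_comm]
    rfl
  rw [monomial_form, coeff_monomial]
  simp only [Equiv.symm_apply_eq]
  rfl

theorem sum_coeff_mul_cycleProd {ι β : Type*} [Fintype ι] [Fintype β] (Z : β → R) {e : ι →₀ ℕ}
    (he : ∑ i, e i = Fintype.card α) :
    ∑ σ : Equiv.Perm α, coeff e (cycleProd (fun r => ∑ i, (X i : MvPolynomial ι R) ^ r) σ) *
        cycleProd (fun r => ∑ b, Z b ^ r) σ =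
      (Fintype.card α).factorial * ∏ i, completeHom (Finset.univ.val.map Z) (e i) := by
  classical
  have sum_pow_mul (r : ℕ) : C (∑ b, Z b ^ r) * (∑ i, (X i : MvPolynomial ι R) ^ r) =
      ∑ p : ι × β, (X p.1 * C (Z p.2)) ^ r := by
    rw [mul_comm]
    simp only [map_sum, map_pow, Finset.sum_mul_sum, ← Finset.sum_product',
      mul_pow, Finset.univ_product_univ]
  calc ∑ σ : Equiv.Perm α, coeff e (cycleProd (fun r => ∑ i, (X i : MvPolynomial ι R) ^ r) σ) *
        cycleProd (fun r => ∑ b, Z b ^ r) σ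
      = coeff e (∑ σ : Equiv.Perm α,
          cycleProd (fun r => ∑ p : ι × β, (X p.1 * C (Z p.2) : MvPolynomial ι R) ^ r) σ) := by
        simp only [coeff_sum, ← sum_pow_mul, cycleProd_mul, ← map_cycleProd, coeff_C_mul,
          mul_comm (coeff _ _)]
    _ = coeff e (C ((Fintype.card α).factorial : R) *
          ∑ a ∈ Finset.piAntidiag Finset.univ (Fintype.card α),
            ∏ i, X i ^ a i * C (completeHom (Finset.univ.val.map Z) (a i))) := by
        rw [sum_cycleProd_sum_pow, completeHom_map_mul X fun b => C (Z b)]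
        simp only [map_completeHom, Multiset.map_map, Function.comp_def, map_natCast]
    _ = (Fintype.card α).factorial * ∏ i, completeHom (Finset.univ.val.map Z) (e i) := by
        simp only [coeff_C_mul, coeff_sum, coeff_prod_X_pow_mul_C]
        simp [he]

end CauchyIdentity

section Frobenius

theorem permPowSum_eq_cycleProd (d : ℕ) (σ : Equiv.Perm (Fin d)) :
    permPowSum d σ = cycleProd (powSum d) σ := by
  rw [permPowSum, cycleProd_eq, Fintype.card_fin]

theorem vandermonde_eq_prod_prod_Ioi (n : ℕ) :
    vandermonde n = ∏ i : Fin n, ∏ j ∈ Finset.Ioi i, (X i - X j) := by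
  rw [vandermonde, Finset.prod_filter, Fintype.prod_prod_type]
  refine Finset.prod_congr rfl fun i _ => ?_
  rw [← Finset.prod_filter, Finset.filter_lt_eq_Ioi]

theorem vandermonde_eq_det (n : ℕ) :
    vandermonde n = (Matrix.projVandermonde 1 (X : Fin n → MvPolynomial (Fin n) ℤ)).det := by
  simp [Matrix.det_projVandermonde, vandermonde_eq_prod_prod_Ioi]

/-- The exponent `w(δ)` of the term of the Vandermonde product attached to the permutation `w`. -/
noncomputable def permStaircase {n : ℕ} (w : Equiv.Perm (Fin n)) : Fin n →₀ ℕ :=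
  Finsupp.equivFunOnFinite.symm fun i => (w i).rev

theorem vandermonde_eq_sum_monomial (n : ℕ) :
    vandermonde n = ∑ w : Equiv.Perm (Fin n), monomial (permStaircase w) (w.sign : ℤ) := by
  rw [vandermonde_eq_det, ← Matrix.det_transpose, Matrix.det_apply']
  refine Finset.sum_congr rfl fun w _ => ?_
  rw [monomial_eq, Finsupp.prod_fintype _ _ (by simp)]
  simp [Matrix.projVandermonde_apply, permStaircase]

theorem sum_permStaircase {n : ℕ} (w : Equiv.Perm (Fin n)) :
    ∑ i, permStaircase w i = ∑ i : Fin n, (i.rev : ℕ) :=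
  Equiv.sum_comp w fun i => (i.rev : ℕ)

theorem staircase_apply (n : ℕ) (lam : ℕ → ℕ) (i : Fin n) :
    staircase n lam i = lam i + i.rev := by
  simp only [staircase, Finsupp.equivFunOnFinite_symm_apply_apply, Fin.val_rev]
  lia

variable {α : Type*} [Fintype α] [DecidableEq α]

/-- The coefficient of `x^{λ+δ}` in `a_δ · p_{cycletype σ}` for `n` variables, where `σ` permutes an
arbitrary finite type. Unlike in `chi`, the number of variables is independent of the degree. -/
noncomputable def chiVars (n : ℕ) (lam : ℕ → ℕ) (σ : Equiv.Perm α) : ℤ :=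
  coeff (staircase n lam) (vandermonde n * cycleProd (powSum n) σ)

theorem chi_eq_chiVars (d : ℕ) (lam : ℕ → ℕ) (σ : Equiv.Perm (Fin d)) :
    chi d lam σ = chiVars d lam σ := by
  rw [chi, permPowSum_eq_cycleProd, chiVars]

variable {R : Type*} [CommRing R] {β : Type*} [Fintype β]

theorem intCast_coeff_cycleProd_powSum {n : ℕ} (e : Fin n →₀ ℕ) (σ : Equiv.Perm α) :
    ((coeff e (cycleProd (powSum n) σ) : ℤ) : R) =
      coeff e (cycleProd (fun r => ∑ i, (X i : MvPolynomial (Fin n) R) ^ r) σ) := by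
  rw [← eq_intCast (Int.castRingHom R), ← coeff_map, map_cycleProd]
  simp [powSum]

theorem sum_coeff_monomial_mul_cycleProd (Z : β → R) {n : ℕ} (c : ℤ) {m e : Fin n →₀ ℕ}
    (h : ∑ i, e i = Fintype.card α + ∑ i, m i) :
    ∑ σ : Equiv.Perm α, ((coeff e (monomial m c * cycleProd (powSum n) σ) : ℤ) : R) *
        cycleProd (fun r => ∑ b, Z b ^ r) σ =
      (Fintype.card α).factorial *
        (c * ∏ i, completeHom (Finset.univ.val.map Z) ((e i : ℤ) - m i)) := by
  by_cases hme : m ≤ e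
  · have sum_sub : ∑ i, (e - m) i = Fintype.card α := by
      have := Finset.sum_congr rfl fun i (_ : i ∈ Finset.univ) => Nat.sub_add_cancel (hme i)
      rw [Finset.sum_add_distrib, h] at this
      exact Nat.add_right_cancel this
    simp only [coeff_monomial_mul', if_pos hme, Int.cast_mul, intCast_coeff_cycleProd_powSum,
      mul_assoc, ← Finset.mul_sum, sum_coeff_mul_cycleProd Z sum_sub, Finsupp.tsub_apply,
      Nat.cast_sub (hme _)]
    ring
  · obtain ⟨i, hi⟩ : ∃ i, e i < m i := by
      simpa [Finsupp.le_def] using hme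
    have prod_eq_zero : ∏ i, completeHom (Finset.univ.val.map Z) ((e i : ℤ) - m i) = 0 :=
      Finset.prod_eq_zero (Finset.mem_univ i)
        (completeHom_of_neg _ (sub_neg.2 (Nat.cast_lt.2 hi)))
    simp [coeff_monomial_mul', hme, prod_eq_zero]

/-- This is Frobenius' character formula `ch χ^λ = s_λ`, paired with power sums of `Z`. -/
theorem sum_chiVars_mul_cycleProd (Z : β → R) {n : ℕ} {lam : ℕ → ℕ}
    (hlam : ∑ i : Fin n, lam i = Fintype.card α) :
    ∑ σ : Equiv.Perm α, (chiVars n lam σ : R) * cycleProd (fun r => ∑ b, Z b ^ r) σ =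
      (Fintype.card α).factorial * (jacobiTrudi (Finset.univ.val.map Z) n lam).det := by
  have degree_eq (w : Equiv.Perm (Fin n)) :
      ∑ i, staircase n lam i = Fintype.card α + ∑ i, permStaircase w i := by
    simp only [staircase_apply, Finset.sum_add_distrib, hlam, sum_permStaircase]
  simp only [chiVars, vandermonde_eq_sum_monomial, Finset.sum_mul, coeff_sum, Int.cast_sum]
  rw [Finset.sum_comm, ← Matrix.det_transpose, Matrix.det_apply', Finset.mul_sum]
  refine Finset.sum_congr rfl fun w _ => ?_
  rw [sum_coeff_monomial_mul_cycleProd Z _ (degree_eq w)]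
  congr 3 with i
  rw [Matrix.transpose_apply, jacobiTrudi_apply, staircase_apply]
  congr 1
  simp only [permStaircase, Finsupp.equivFunOnFinite_symm_apply_apply, Fin.val_rev]
  omega

end Frobenius

section Stability

variable {α : Type*} [Fintype α] [DecidableEq α]

theorem vandermonde_succ (n : ℕ) :
    vandermonde (n + 1) =
      rename Fin.castSucc (vandermonde n) * ∏ i : Fin n, (X i.castSucc - X (Fin.last n)) := by
  have prod_Ioi_castSucc (i : Fin n) :
      ∏ j ∈ Finset.Ioi i.castSucc, (X i.castSucc - X j : MvPolynomial (Fin (n + 1)) ℤ) =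
        (∏ j ∈ Finset.Ioi i, (X i.castSucc - X j.castSucc)) *
          (X i.castSucc - X (Fin.last n)) := by
    simp only [← Finset.filter_lt_eq_Ioi, Finset.prod_filter, Fin.prod_univ_castSucc,
      Fin.castSucc_lt_castSucc_iff, Fin.castSucc_lt_last, if_true]
  rw [vandermonde_eq_prod_prod_Ioi, Fin.prod_univ_castSucc, ← Fin.top_eq_last, Finset.Ioi_top,
    Finset.prod_empty, mul_one, Fin.top_eq_last]
  simp [prod_Ioi_castSucc, Finset.prod_mul_distrib, vandermonde_eq_prod_prod_Ioi]

theorem killCompl_castSucc_X_castSucc {n : ℕ} (i : Fin n) :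
    killCompl (R := ℤ) (Fin.castSucc_injective n) (X i.castSucc) = X i := by
  rw [← rename_X (R := ℤ) Fin.castSucc, killCompl_rename_app]

theorem killCompl_castSucc_X_last (n : ℕ) :
    killCompl (R := ℤ) (Fin.castSucc_injective n) (X (Fin.last n)) = 0 := by
  simp [killCompl]

theorem killCompl_vandermonde_succ (n : ℕ) :
    killCompl (Fin.castSucc_injective n) (vandermonde (n + 1)) =
      monomial (Finsupp.equivFunOnFinite.symm fun _ => 1) 1 * vandermonde n := by
  simp [vandermonde_succ, killCompl_rename_app, killCompl_castSucc_X_castSucc,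
    killCompl_castSucc_X_last, monomial_eq, Finsupp.prod_fintype, mul_comm]

theorem killCompl_cycleProd_powSum_succ (n : ℕ) (σ : Equiv.Perm α) :
    killCompl (Fin.castSucc_injective n) (cycleProd (powSum (n + 1)) σ) =
      cycleProd (powSum n) σ := by
  refine (map_cycleProd (killCompl (R := ℤ) (Fin.castSucc_injective n)).toRingHom _ σ).trans
    (cycleProd_congr (fun r hr => ?_) σ)
  simp [powSum, Fin.sum_univ_castSucc, killCompl_castSucc_X_castSucc, killCompl_castSucc_X_last, hr]

theorem staircase_succ {n : ℕ} {lam : ℕ → ℕ} (h : lam n = 0) :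
    staircase (n + 1) lam =
      (Finsupp.equivFunOnFinite.symm (fun _ => 1) + staircase n lam).mapDomain Fin.castSucc := by
  ext i
  induction i using Fin.lastCases with
  | last =>
    rw [Finsupp.mapDomain_of_notMem_range _ _ (by simp)]
    simp [staircase_apply, h]
  | cast i =>
    rw [Finsupp.mapDomain_apply (Fin.castSucc_injective n)]
    simp only [staircase_apply, Finsupp.add_apply, Finsupp.equivFunOnFinite_symm_apply_apply,
      Fin.val_castSucc, Fin.val_rev]
    omega

theorem chiVars_succ {n : ℕ} {lam : ℕ → ℕ} (h : lam n = 0) (σ : Equiv.Perm α) :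
    chiVars (n + 1) lam σ = chiVars n lam σ := by
  rw [chiVars, staircase_succ h, ← coeff_killCompl (Fin.castSucc_injective n), map_mul,
    killCompl_vandermonde_succ, killCompl_cycleProd_powSum_succ, mul_assoc, coeff_monomial_mul,
    one_mul, chiVars]

theorem chiVars_eq_chiVars_of_le {m n : ℕ} (hmn : m ≤ n) {lam : ℕ → ℕ}
    (h : ∀ i, m ≤ i → lam i = 0) (σ : Equiv.Perm α) :
    chiVars n lam σ = chiVars m lam σ := by
  induction n, hmn using Nat.le_induction with
  | base => rfl
  | succ n hmn ih => rw [chiVars_succ (h n hmn), ih]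

end Stability

section TwoRow

variable {α : Type*} [Fintype α] [DecidableEq α]

theorem cycleProd_powSum_isHomogeneous (n : ℕ) (σ : Equiv.Perm α) :
    (cycleProd (powSum n) σ).IsHomogeneous (Fintype.card α) := by
  have powSum_isHomogeneous (r : ℕ) : (powSum n r).IsHomogeneous r :=
    IsHomogeneous.sum _ _ _ fun i _ => by simpa using (isHomogeneous_X ℤ i).pow r
  rw [cycleProd_eq_prod_cycleClass, ← Finset.card_univ,
    Finset.card_eq_sum_card_fiberwise fun m _ => Finset.mem_univ (cycleClass σ m)]
  exact IsHomogeneous.prod _ _ _ fun c _ => powSum_isHomogeneous _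

theorem coeff_eq_coeff_aeval_of_isHomogeneous {R : Type*} [CommRing R] {N : ℕ}
    {P : MvPolynomial (Fin 2) R} (hP : P.IsHomogeneous N) {e : Fin 2 →₀ ℕ} (he : e 0 + e 1 = N) :
    coeff e P = (aeval ![1, Polynomial.X] P : Polynomial R).coeff (e 1) := by
  have coeff_eq_zero {d : Fin 2 →₀ ℕ} (hd : d 1 = e 1) (hde : d ≠ e) : coeff d P = 0 := by
    refine hP.coeff_eq_zero (fun hdeg => hde ?_)
    rw [Finsupp.degree_eq_sum, Fin.sum_univ_two] at hdeg
    ext i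
    fin_cases i
    · exact Nat.add_right_cancel ((hdeg.trans he.symm).trans (congrArg _ hd.symm))
    · exact hd
  simp only [aeval_def, eval₂_eq', Polynomial.finsetSum_coeff, Fin.prod_univ_two,
    Matrix.cons_val_zero, Matrix.cons_val_one, one_pow, one_mul,
    ← Polynomial.C_eq_algebraMap, Polynomial.coeff_C_mul_X_pow]
  rw [Finset.sum_eq_single e]
  · simp
  · exact fun d _ hde => ite_eq_right_iff.2 fun h => coeff_eq_zero h.symm hde
  · simp

theorem vandermonde_two : vandermonde 2 = X 0 - X 1 := by
  simp [vandermonde_eq_prod_prod_Ioi, Fin.prod_univ_two, show Finset.Ioi (0 : Fin 2) = {1} from rfl,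
    show Finset.Ioi (1 : Fin 2) = ∅ from rfl]

/-- The generating polynomial `(1 - X) ∏_c (1 + X^c)`, with `c` running over the cycle lengths of
`σ`, whose coefficient of `X^i` is the value at `σ` of the two-row character `χ^{(N - i, i)}`. -/
noncomputable def twoRowCharPoly (σ : Equiv.Perm α) : Polynomial ℤ :=
  (1 - Polynomial.X) * cycleProd (fun r => 1 + Polynomial.X ^ r) σ

theorem chiVars_two {lam : ℕ → ℕ} (hlam : lam 0 + lam 1 = Fintype.card α) (σ : Equiv.Perm α) :
    chiVars 2 lam σ = (twoRowCharPoly σ).coeff (lam 1) := by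
  have isHomogeneous : (vandermonde 2 * cycleProd (powSum 2) σ).IsHomogeneous
      (1 + Fintype.card α) := by
    rw [vandermonde_two]
    exact ((isHomogeneous_X ℤ 0).sub (isHomogeneous_X ℤ 1)).mul
      (cycleProd_powSum_isHomogeneous 2 σ)
  have degree_eq : staircase 2 lam 0 + staircase 2 lam 1 = 1 + Fintype.card α := by
    simp only [staircase_apply, Fin.val_zero, Fin.val_one, Fin.val_rev]
    omega
  have aeval_cycleProd : aeval ![1, Polynomial.X] (cycleProd (powSum 2) σ) =
      cycleProd (fun r => (1 + Polynomial.X ^ r : Polynomial ℤ)) σ := by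
    refine (map_cycleProd (S := Polynomial ℤ)
      (aeval (R := ℤ) ![1, Polynomial.X]).toRingHom _ σ).trans ?_
    simp [powSum, Fin.sum_univ_two]
  rw [chiVars, coeff_eq_coeff_aeval_of_isHomogeneous isHomogeneous degree_eq, map_mul,
    aeval_cycleProd, vandermonde_two, twoRowCharPoly]
  simp [staircase_apply]

theorem psize_row (i : ℕ) : psize (row i) = i :=
  Finsupp.sum_single_index rfl

theorem chi_pad_row {d i : ℕ} (hd : 2 ≤ d) (hi : i ≤ d) (σ : Equiv.Perm (Fin d)) :
    chi d (pad (row i) d) σ = (twoRowCharPoly σ).coeff i := by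
  have pad_zero : pad (row i) d 0 = d - i := by simp [pad, psize_row]
  have pad_one : pad (row i) d 1 = i := by simp [pad, row]
  have pad_eq_zero (k : ℕ) (hk : 2 ≤ k) : pad (row i) d k = 0 := by
    rw [pad, if_neg (by omega), row, Finsupp.single_eq_of_ne (by omega)]
  have size_eq : pad (row i) d 0 + pad (row i) d 1 = Fintype.card (Fin d) := by
    rw [pad_zero, pad_one, Nat.sub_add_cancel hi, Fintype.card_fin]
  rw [chi_eq_chiVars, chiVars_eq_chiVars_of_le hd pad_eq_zero, chiVars_two size_eq, pad_one]

theorem aeval_twoRowCharPoly {R : Type*} [CommRing R] [Algebra ℤ R] (z : R) (σ : Equiv.Perm α) :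
    Polynomial.aeval z (twoRowCharPoly σ) = (1 - z) * cycleProd (fun r => 1 + z ^ r) σ := by
  have aeval_cycleProd := map_cycleProd (Polynomial.aeval (R := ℤ) z).toRingHom
    (fun r => 1 + Polynomial.X ^ r) σ
  rw [twoRowCharPoly, map_mul]
  refine congrArg₂ _ (by simp) (aeval_cycleProd.trans ?_)
  simp

theorem aeval_twoRowCharPoly_mul_aeval {R : Type*} [CommRing R] [Algebra ℤ R] (x y : R)
    (σ : Equiv.Perm α) :
    Polynomial.aeval x (twoRowCharPoly σ) * Polynomial.aeval y (twoRowCharPoly σ) =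
      (1 - x) * (1 - y) * cycleProd (fun r => ∑ b, ![1, x * y, x, y] b ^ r) σ := by
  have sum_pow (r : ℕ) : ∑ b, ![1, x * y, x, y] b ^ r = (1 + x ^ r) * (1 + y ^ r) := by
    simp only [Fin.sum_univ_four, Matrix.cons_val]
    ring
  simp only [aeval_twoRowCharPoly, sum_pow, cycleProd_mul]
  ring

end TwoRow

section ReducedKronecker

open scoped Polynomial

theorem coeff_aeval_varX (A : ℤ[X]) (n : ℕ) :
    (Polynomial.aeval varX A).coeff n = Polynomial.C (A.coeff n) := by
  simp [Polynomial.aeval_X_left_eq_map]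

theorem coeff_aeval_varY (B : ℤ[X]) (n : ℕ) :
    (Polynomial.aeval varY B).coeff n = Polynomial.monomial n (B.coeff n) := by
  have aeval_eq_comp : Polynomial.aeval varY B = (B.map Polynomial.C).comp varY := by
    rw [Polynomial.comp, Polynomial.eval₂_map]
    rfl
  rw [aeval_eq_comp, Polynomial.comp_C_mul_X_coeff, Polynomial.coeff_map,
    Polynomial.C_mul_X_pow_eq_monomial]

theorem coeff_coeff_aeval_mul_aeval (A B : ℤ[X]) (i l : ℕ) :
    ((Polynomial.aeval varX A * Polynomial.aeval varY B).coeff (i + l)).coeff l =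
      A.coeff i * B.coeff l := by
  simp only [Polynomial.coeff_mul _ _ (i + l), coeff_aeval_varX, coeff_aeval_varY,
    Polynomial.finsetSum_coeff, Polynomial.coeff_C_mul, Polynomial.coeff_monomial]
  rw [Finset.sum_eq_single (i, l)]
  · simp
  · rintro ⟨a, b⟩ hab hne
    rw [if_neg, mul_zero]
    rintro rfl
    exact hne (by simpa using hab)
  · simp

theorem gKron_pad_row_eq_coeff {d i l : ℕ} (hd : 2 ≤ d) (hi : i ≤ d) (hl : l ≤ d) {μ : ℕ → ℕ}
    (hμ : ∑ k : Fin d, μ k = d) :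
    gKron d (pad (row i) d) (pad (row l) d) μ =
      (((1 - varX) * (1 - varY) *
        (jacobiTrudi {1, varX * varY, varX, varY} d μ).det).coeff (i + l)).coeff l := by
  let alphabet : Fin 4 → ℤ[X][X] := ![1, varX * varY, varX, varY]
  have chi_mul_chi (σ : Equiv.Perm (Fin d)) :
      chi d (pad (row i) d) σ * chi d (pad (row l) d) σ =
        (((1 - varX) * (1 - varY) *
          cycleProd (fun r => ∑ b, alphabet b ^ r) σ).coeff (i + l)).coeff l := by
    rw [chi_pad_row hd hi, chi_pad_row hd hl, ← coeff_coeff_aeval_mul_aeval,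
      aeval_twoRowCharPoly_mul_aeval]
  have frobenius := sum_chiVars_mul_cycleProd (α := Fin d) alphabet
    (hμ.trans (Fintype.card_fin d).symm)
  rw [gKron]
  refine Int.ediv_eq_of_eq_mul_right (Nat.cast_ne_zero.2 d.factorial_ne_zero) ?_
  calc ∑ σ : Equiv.Perm (Fin d), chi d (pad (row i) d) σ * chi d (pad (row l) d) σ * chi d μ σ
      = (((1 - varX) * (1 - varY) * ∑ σ : Equiv.Perm (Fin d), (chiVars d μ σ : ℤ[X][X]) *
          cycleProd (fun r => ∑ b, alphabet b ^ r) σ).coeff (i + l)).coeff l := by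
        simp only [Finset.mul_sum, Polynomial.finsetSum_coeff]
        refine Finset.sum_congr rfl fun σ _ => ?_
        rw [chi_mul_chi, chi_eq_chiVars, mul_left_comm, Polynomial.coeff_intCast_mul,
          Polynomial.coeff_intCast_mul, mul_comm]
        rfl
    _ = d.factorial * (((1 - varX) * (1 - varY) *
          (jacobiTrudi {1, varX * varY, varX, varY} d μ).det).coeff (i + l)).coeff l := by
        rw [frobenius, Fintype.card_fin, mul_left_comm, Polynomial.coeff_natCast_mul,
          Polynomial.coeff_natCast_mul]
        rfl

theorem sum_pad {n : ℕ →₀ ℕ} {d : ℕ} (hsize : psize n ≤ d + 1)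
    (hsupp : n.support ⊆ Finset.range d) : ∑ k : Fin (d + 1), pad n (d + 1) k = d + 1 := by
  have psize_eq : psize n = ∑ k : Fin d, n k := by
    rw [psize, Finsupp.sum_of_support_subset _ hsupp _ (by simp), Finset.sum_range]
  simp only [Fin.sum_univ_succ, pad, Fin.val_zero, if_true, Fin.val_succ, Nat.succ_ne_zero,
    if_false, Nat.add_sub_cancel, ← psize_eq, Nat.sub_add_cancel hsize]

theorem exists_forall_gKron_pad_row_le {n : ℕ →₀ ℕ} (hn : IsPtn n) {i j k l : ℕ} (hij : i ≤ j)
    (hjk : j ≤ k) (hkl : j + k = i + l) :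
    ∃ D : ℕ, ∀ d : ℕ, D ≤ d →
      gKron d (pad (row i) d) (pad (row l) d) (pad n d) ≤
        gKron d (pad (row j) d) (pad (row k) d) (pad n d) := by
  obtain ⟨s, hs⟩ := n.support.exists_nat_subset_range
  refine ⟨psize n + i + l + s + 2, fun d hd => ?_⟩
  obtain ⟨d, rfl⟩ := Nat.exists_eq_add_of_le' (show 1 ≤ d by omega)
  have size_eq : ∑ k : Fin (d + 1), pad n (d + 1) k = d + 1 :=
    sum_pad (by omega) (hs.trans (Finset.range_subset_range.2 (by omega)))
  have antitone_tail : Antitone fun m => pad n (d + 1) (m + 1) :=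
    fun a b hab => by simpa [pad] using hn a b hab
  obtain ⟨r, hr, hdvd⟩ :=
    exists_mem_unimodalCone_pow_dvd_sub (dvd_refl varX) (Dvd.intro_left _ rfl : varX ∣ varY) d
      antitone_tail
  have coeff_eq := Polynomial.X_pow_dvd_iff.1 hdvd (i + l) (by simp only [pad, if_true]; omega)
  rw [Polynomial.coeff_sub, sub_eq_zero] at coeff_eq
  rw [gKron_pad_row_eq_coeff (by omega) (by omega) (by omega) size_eq,
    gKron_pad_row_eq_coeff (by omega) (by omega) (by omega) size_eq, hkl, coeff_eq]
  exact coeff_coeff_le_of_mem_unimodalCone hr hij hjk hkl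

theorem gKron_comm (d : ℕ) (lam mu nu : ℕ → ℕ) : gKron d lam mu nu = gKron d mu lam nu := by
  simp only [gKron, mul_comm (chi d lam _)]

end ReducedKronecker

/-- Theorem `thm!` of the paper: for `i < j ≤ k < l` with `j + k = i + l` and any
partition `ν`, the reduced Kronecker coefficients of one-row partitions satisfy
`ḡ_{(j)(k)}^ν ≥ ḡ_{(i)(l)}^ν` (stated via the stabilized Kronecker coefficients);
in particular the log-concavity conjecture holds for one-row partitions. -/
theorem reduced_kron_one_row (n : ℕ →₀ ℕ) (hn : IsPtn n) :
    (∀ i j k l : ℕ, i < j → j ≤ k → k < l → j + k = i + l →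
      ∃ D : ℕ, ∀ d : ℕ, D ≤ d →
        gKron d (pad (row i) d) (pad (row l) d) (pad n d) ≤
          gKron d (pad (row j) d) (pad (row k) d) (pad n d)) ∧
    (∀ a b : ℕ, Even (a + b) →
      ∃ D : ℕ, ∀ d : ℕ, D ≤ d →
        gKron d (pad (row a) d) (pad (row b) d) (pad n d) ≤
          gKron d (pad (row ((a + b) / 2)) d) (pad (row ((a + b) / 2)) d) (pad n d)) := by
  refine ⟨fun i j k l hij hjk _ hkl => exists_forall_gKron_pad_row_le hn hij.le hjk hkl,
    fun a b hab => ?_⟩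
  have half_add_half : (a + b) / 2 + (a + b) / 2 = a + b := by
    rw [← mul_two, Nat.div_mul_cancel hab.two_dvd]
  rcases le_total a b with h | h
  · exact exists_forall_gKron_pad_row_le hn (by omega) le_rfl half_add_half
  · simp only [gKron_comm _ (pad (row a) _)]
    exact exists_forall_gKron_pad_row_le hn (by omega) le_rfl (half_add_half.trans (add_comm a b))
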